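/- Let a, b ∈ R^m be nonzero with 𝔰(a) = 𝔰(b) and lc(a) = lc(b), and let G ⊆ R^m be a signature Gröbner basis up to 𝔰(a). If both a and b are regular top s-irreducible modulo G, then ‾a = 0 if and only if ‾b = 0, and if ‾a and ‾b are nonzero then lp(‾a) = lp(‾b) and lc(‾a) = lc(‾b). -/

import Mathlib

namespace SigGB

noncomputable section

/-- Power-products in `n` indeterminates, written additively as exponent vectors
(so the power-product `1` is `0`, and multiplication of power-products is `+`). -/
abbrev PP (n : ℕ) : Type := Fin n →₀ ℕ

/-- Terms: a power-product together with a component index (`t·e_i ↝ (t, i)`). -/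
abbrev Term (n m : ℕ) : Type := PP n × Fin m

/-- Multiplication of a term by a power-product: `t ⊗ (s·e_i) = (t·s)·e_i`. -/
def mulTerm {n m : ℕ} (t : PP n) (u : Term n m) : Term n m := (t + u.1, u.2)

/-- Divisibility of terms: `u ∣ v` iff `v = t ⊗ u` for some power-product `t`. -/
def termDvd {n m : ℕ} (u v : Term n m) : Prop := ∃ t : PP n, v = mulTerm t u

/-- Componentwise lcm of power-products. -/
noncomputable def lcmPP {n : ℕ} (s t : PP n) : PP n := Finsupp.zipWith max (max_self 0) s t

/-- Strict part of a relation. -/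
def strict {α : Type*} (r : α → α → Prop) (x y : α) : Prop := r x y ∧ x ≠ y

/-- `ple` is an admissible order on power-products and `tle` is a compatible
linear order on terms. -/
structure OrdersOK {n m : ℕ} (ple : PP n → PP n → Prop)
    (tle : Term n m → Term n m → Prop) : Prop where
  ple_refl : ∀ t, ple t t
  ple_trans : ∀ s t u, ple s t → ple t u → ple s u
  ple_antisymm : ∀ s t, ple s t → ple t s → s = t
  ple_total : ∀ s t, ple s t ∨ ple t s
  ple_one_le : ∀ t, ple 0 t
  ple_mul : ∀ (t s₁ s₂ : PP n), ple s₁ s₂ → ple (t + s₁) (t + s₂)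
  tle_refl : ∀ u, tle u u
  tle_trans : ∀ u v w, tle u v → tle v w → tle u w
  tle_antisymm : ∀ u v, tle u v → tle v u → u = v
  tle_total : ∀ u v, tle u v ∨ tle v u
  tle_mul : ∀ (t : PP n) (u v : Term n m), tle u v → tle (mulTerm t u) (mulTerm t v)
  tle_compat : ∀ (s t : PP n) (i j : Fin m), ple s t → i ≤ j → tle (s, i) (t, j)

variable {K : Type*} [Field K] {n m : ℕ} [NeZero m]

variable (f : Fin m → MvPolynomial (Fin n) K)
variable (ple : PP n → PP n → Prop)
variable (tle : Term n m → Term n m → Prop)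

/-- The module homomorphism `R^m → R` determined by `e_i ↦ f i`, i.e. `a ↦ ‾a`. -/
def bar (a : Fin m → MvPolynomial (Fin n) K) : MvPolynomial (Fin n) K := ∑ i, a i * f i

/-- Multiplication of a module element by a coefficient `c` and a power-product `t`. -/
noncomputable def monomMul (c : K) (t : PP n) (a : Fin m → MvPolynomial (Fin n) K) :
    Fin m → MvPolynomial (Fin n) K :=
  fun i => MvPolynomial.monomial t c * a i

/-- The coefficient of a term in a module element. -/
def coeffM (a : Fin m → MvPolynomial (Fin n) K) (u : Term n m) : K :=
  MvPolynomial.coeff u.1 (a u.2)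

open Classical in
/-- Leading power-product of a polynomial w.r.t. `ple`
(junk value `0`, i.e. the power-product `1`, for the zero polynomial). -/
noncomputable def lp (p : MvPolynomial (Fin n) K) : PP n :=
  if h : ∃ t, MvPolynomial.coeff t p ≠ 0 ∧ ∀ s, MvPolynomial.coeff s p ≠ 0 → ple s t
  then h.choose else 0

/-- Leading coefficient of a polynomial w.r.t. `ple`. -/
noncomputable def lc (p : MvPolynomial (Fin n) K) : K := MvPolynomial.coeff (lp ple p) p

open Classical in
/-- Signature of a module element: its `tle`-largest term with nonzero coefficient
(junk value for `0`). -/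
noncomputable def sig (a : Fin m → MvPolynomial (Fin n) K) : Term n m :=
  if h : ∃ u, coeffM a u ≠ 0 ∧ ∀ v, coeffM a v ≠ 0 → tle v u
  then h.choose else ((0 : PP n), (0 : Fin m))

/-- Leading coefficient of a module element. -/
noncomputable def lcM (a : Fin m → MvPolynomial (Fin n) K) : K := coeffM a (sig tle a)

/-- One-step s-reduction of `a` to `b` modulo `G`, witnessed by `g ∈ G` and the
power-product `t`. -/
def RedStepWith (G : Set (Fin m → MvPolynomial (Fin n) K))
    (a b g : Fin m → MvPolynomial (Fin n) K) (t : PP n) : Prop :=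
  g ∈ G ∧ bar f g ≠ 0 ∧
    MvPolynomial.coeff (t + lp ple (bar f g)) (bar f a) ≠ 0 ∧
    b = a - monomMul (MvPolynomial.coeff (t + lp ple (bar f g)) (bar f a) / lc ple (bar f g)) t g ∧
    tle (mulTerm t (sig tle g)) (sig tle a)

/-- The step witnessed by `g` and `t` is regular: `t ⊗ 𝔰(g) ≺_t 𝔰(a)`. -/
def RegularWith (a g : Fin m → MvPolynomial (Fin n) K) (t : PP n) : Prop :=
  strict tle (mulTerm t (sig tle g)) (sig tle a)

/-- The step witnessed by `g` and `t` is top: `t·lp(‾g) = lp(‾a)`. -/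
def TopWith (a g : Fin m → MvPolynomial (Fin n) K) (t : PP n) : Prop :=
  t + lp ple (bar f g) = lp ple (bar f a)

/-- `a` s-reduces to `b` modulo `G` in one step. -/
def SigRedStep (G : Set (Fin m → MvPolynomial (Fin n) K))
    (a b : Fin m → MvPolynomial (Fin n) K) : Prop :=
  ∃ g t, RedStepWith f ple tle G a b g t

/-- `a` regular s-reduces to `b` modulo `G` in one step. -/
def RegRedStep (G : Set (Fin m → MvPolynomial (Fin n) K))
    (a b : Fin m → MvPolynomial (Fin n) K) : Prop :=
  ∃ g t, RedStepWith f ple tle G a b g t ∧ RegularWith tle a g t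

/-- `a` regular top s-reduces to `b` modulo `G` in one step. -/
def RegTopRedStep (G : Set (Fin m → MvPolynomial (Fin n) K))
    (a b : Fin m → MvPolynomial (Fin n) K) : Prop :=
  ∃ g t, RedStepWith f ple tle G a b g t ∧ RegularWith tle a g t ∧ TopWith f ple a g t

/-- `a` is regular s-irreducible modulo `G`. -/
def RegIrred (G : Set (Fin m → MvPolynomial (Fin n) K))
    (a : Fin m → MvPolynomial (Fin n) K) : Prop :=
  ∀ b, ¬ RegRedStep f ple tle G a b

/-- `a` is regular top s-irreducible modulo `G`. -/
def RegTopIrred (G : Set (Fin m → MvPolynomial (Fin n) K))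
    (a : Fin m → MvPolynomial (Fin n) K) : Prop :=
  ∀ b, ¬ RegTopRedStep f ple tle G a b

/-- `a` s-reduces to zero modulo `G`. -/
def SigRedZero (G : Set (Fin m → MvPolynomial (Fin n) K))
    (a : Fin m → MvPolynomial (Fin n) K) : Prop :=
  ∃ b, Relation.ReflTransGen (SigRedStep f ple tle G) a b ∧ bar f b = 0

/-- `a` regular s-reduces to zero modulo `G`. -/
def RegRedZero (G : Set (Fin m → MvPolynomial (Fin n) K))
    (a : Fin m → MvPolynomial (Fin n) K) : Prop :=
  ∃ b, Relation.ReflTransGen (RegRedStep f ple tle G) a b ∧ bar f b = 0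

/-- `G` is a signature Gröbner basis in the term `u`. -/
def IsSigGBIn (G : Set (Fin m → MvPolynomial (Fin n) K)) (u : Term n m) : Prop :=
  ∀ a : Fin m → MvPolynomial (Fin n) K, a ≠ 0 → sig tle a = u → SigRedZero f ple tle G a

/-- `G` is a signature Gröbner basis up to the term `u`. -/
def IsSigGBUpto (G : Set (Fin m → MvPolynomial (Fin n) K)) (u : Term n m) : Prop :=
  ∀ v, strict tle v u → IsSigGBIn f ple tle G v

/-- `u` is a syzygy signature. -/
def IsSyzSig (u : Term n m) : Prop :=
  ∃ a : Fin m → MvPolynomial (Fin n) K, a ≠ 0 ∧ sig tle a = u ∧ bar f a = 0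

/-- The sig-poly-pair `(𝔰(a), ‾a)` of a module element `a`. -/
noncomputable def sppOf (a : Fin m → MvPolynomial (Fin n) K) :
    Term n m × MvPolynomial (Fin n) K :=
  (sig tle a, bar f a)

/-- `x` is a sig-poly-pair. -/
def IsSPP (x : Term n m × MvPolynomial (Fin n) K) : Prop :=
  ∃ a : Fin m → MvPolynomial (Fin n) K, a ≠ 0 ∧ sppOf f tle a = x

/-- `ro` is a rewrite order. -/
def IsRewriteOrder
    (ro : Term n m × MvPolynomial (Fin n) K → Term n m × MvPolynomial (Fin n) K → Prop) :
    Prop :=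
  (∀ x, IsSPP f tle x → ro x x) ∧
  (∀ x y z, IsSPP f tle x → IsSPP f tle y → IsSPP f tle z → ro x y → ro y z → ro x z) ∧
  (∀ x y, IsSPP f tle x → IsSPP f tle y → (ro x y ∨ ro y x)) ∧
  (∀ x y, IsSPP f tle x → IsSPP f tle y → ro x y → ro y x → x.1 = y.1) ∧
  (∀ (G : Set (Fin m → MvPolynomial (Fin n) K)) (a b : Fin m → MvPolynomial (Fin n) K),
    IsSigGBUpto f ple tle G (sig tle b) → a ∈ G → b ∈ G → a ≠ 0 → b ≠ 0 →
    termDvd (sig tle a) (sig tle b) → RegTopIrred f ple tle G b →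
    ro (sppOf f tle a) (sppOf f tle b))

/-- `a` is a canonical rewriter in the term `u` w.r.t. `G` (for the rewrite order `ro`). -/
def IsCanonRewriter
    (ro : Term n m × MvPolynomial (Fin n) K → Term n m × MvPolynomial (Fin n) K → Prop)
    (G : Set (Fin m → MvPolynomial (Fin n) K)) (u : Term n m)
    (a : Fin m → MvPolynomial (Fin n) K) : Prop :=
  a ∈ G ∧ a ≠ 0 ∧ termDvd (sig tle a) u ∧
    ∀ g ∈ G, g ≠ 0 → termDvd (sig tle g) u → ro (sppOf f tle g) (sppOf f tle a)

/-- `G` is a rewrite basis in the term `u` (for the rewrite order `ro`). -/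
def IsRBIn
    (ro : Term n m × MvPolynomial (Fin n) K → Term n m × MvPolynomial (Fin n) K → Prop)
    (G : Set (Fin m → MvPolynomial (Fin n) K)) (u : Term n m) : Prop :=
  IsSyzSig f tle u ∨
    ∃ g, IsCanonRewriter f tle ro G u g ∧
      RegTopIrred f ple tle G (monomMul (1 : K) (u.1 - (sig tle g).1) g)

/-- `G` is a rewrite basis up to the term `u` (for the rewrite order `ro`). -/
def IsRBUpto
    (ro : Term n m × MvPolynomial (Fin n) K → Term n m × MvPolynomial (Fin n) K → Prop)
    (G : Set (Fin m → MvPolynomial (Fin n) K)) (u : Term n m) : Prop :=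
  ∀ v, strict tle v u → IsRBIn f ple tle ro G v

/-- The S-pair of two module elements. -/
noncomputable def spair (a b : Fin m → MvPolynomial (Fin n) K) :
    Fin m → MvPolynomial (Fin n) K :=
  monomMul ((1 : K) / lc ple (bar f a))
      (lcmPP (lp ple (bar f a)) (lp ple (bar f b)) - lp ple (bar f a)) a -
    monomMul ((1 : K) / lc ple (bar f b))
      (lcmPP (lp ple (bar f a)) (lp ple (bar f b)) - lp ple (bar f b)) b

/-- `a` and `b` give rise to a regular S-pair. -/
def IsRegularSPair (a b : Fin m → MvPolynomial (Fin n) K) : Prop :=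
  bar f a ≠ 0 ∧ bar f b ≠ 0 ∧
    mulTerm (lcmPP (lp ple (bar f a)) (lp ple (bar f b)) - lp ple (bar f a)) (sig tle a) ≠
      mulTerm (lcmPP (lp ple (bar f a)) (lp ple (bar f b)) - lp ple (bar f b)) (sig tle b)

/-- `B` is a Gröbner basis of the ideal `I` w.r.t. `ple`. -/
def IsGroebnerBasis (B : Set (MvPolynomial (Fin n) K)) (I : Ideal (MvPolynomial (Fin n) K)) :
    Prop :=
  (∀ b ∈ B, b ∈ I) ∧ Ideal.span B = I ∧
    ∀ p ∈ I, p ≠ 0 → ∃ b ∈ B, b ≠ 0 ∧ ∃ t : PP n, lp ple p = t + lp ple b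

/-- One step of ordinary polynomial reduction of `p` to `q` modulo `B`. -/
def PolyRedStep (B : Set (MvPolynomial (Fin n) K)) (p q : MvPolynomial (Fin n) K) : Prop :=
  ∃ r ∈ B, r ≠ 0 ∧ ∃ t : PP n, MvPolynomial.coeff (t + lp ple r) p ≠ 0 ∧
    q = p - MvPolynomial.monomial t (MvPolynomial.coeff (t + lp ple r) p / lc ple r) * r

set_option linter.unusedSectionVars false

/-- A nonempty finite set has a largest element with respect to a total preorder. -/
theorem exists_max_of_finite {α : Type*} (r : α → α → Prop)
    (hrefl : ∀ x, r x x) (htrans : ∀ x y z, r x y → r y z → r x z)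
    (htotal : ∀ x y, r x y ∨ r y x) {S : Set α} (hS : S.Finite) (hne : S.Nonempty) :
    ∃ x ∈ S, ∀ y ∈ S, r y x := by
  induction S, hS using Set.Finite.induction_on with
  | empty => exact absurd hne Set.not_nonempty_empty
  | @insert x S _ _ ih =>
    rcases S.eq_empty_or_nonempty with rfl | hS
    · exact ⟨x, by simp, by simpa using hrefl x⟩
    · obtain ⟨y, hy, hmax⟩ := ih hS
      rcases htotal x y with h | h
      · exact ⟨y, Set.mem_insert_of_mem _ hy, fun z hz => hz.elim (fun e => e ▸ h) (hmax z)⟩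
      · exact ⟨x, Set.mem_insert _ _, fun z hz =>
          hz.elim (fun e => e ▸ hrefl x) fun hz => htrans _ _ _ (hmax z hz) h⟩

section

variable {ple tle}

theorem lp_spec (hord : OrdersOK ple tle) {p : MvPolynomial (Fin n) K} (hp : p ≠ 0) :
    MvPolynomial.coeff (lp ple p) p ≠ 0 ∧
      ∀ s, MvPolynomial.coeff s p ≠ 0 → ple s (lp ple p) := by
  have h : ∃ t, MvPolynomial.coeff t p ≠ 0 ∧ ∀ s, MvPolynomial.coeff s p ≠ 0 → ple s t :=
    exists_max_of_finite (S := {s | MvPolynomial.coeff s p ≠ 0}) ple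
      hord.ple_refl hord.ple_trans hord.ple_total
      (p.support.finite_toSet.subset fun s hs => by simpa using hs)
      (MvPolynomial.ne_zero_iff.mp hp)
  rw [lp, dif_pos h]
  exact h.choose_spec

theorem lp_eq_of_isGreatest (hord : OrdersOK ple tle) {p : MvPolynomial (Fin n) K} {t : PP n}
    (ht : MvPolynomial.coeff t p ≠ 0) (hmax : ∀ s, MvPolynomial.coeff s p ≠ 0 → ple s t) :
    lp ple p = t := by
  have hp : p ≠ 0 := MvPolynomial.ne_zero_iff.mpr ⟨t, ht⟩
  exact hord.ple_antisymm _ _ (hmax _ (lp_spec hord hp).1) ((lp_spec hord hp).2 t ht)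

theorem lp_neg (hord : OrdersOK ple tle) {p : MvPolynomial (Fin n) K} (hp : p ≠ 0) :
    lp ple (-p) = lp ple p :=
  lp_eq_of_isGreatest hord (by simpa using (lp_spec hord hp).1)
    (by simpa using (lp_spec hord hp).2)

theorem sig_spec (hord : OrdersOK ple tle) {a : Fin m → MvPolynomial (Fin n) K} (ha : a ≠ 0) :
    coeffM a (sig tle a) ≠ 0 ∧ ∀ v, coeffM a v ≠ 0 → tle v (sig tle a) := by
  have hfin : {u : Term n m | coeffM a u ≠ 0}.Finite := by
    refine ((Finset.univ.biUnion fun i => (a i).support) ×ˢ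
      (Finset.univ : Finset (Fin m))).finite_toSet.subset ?_
    rintro ⟨s, i⟩ hs
    simpa using ⟨i, hs⟩
  have hne : {u : Term n m | coeffM a u ≠ 0}.Nonempty := by
    obtain ⟨i, hi⟩ := Function.ne_iff.mp ha
    obtain ⟨s, hs⟩ := MvPolynomial.ne_zero_iff.mp hi
    exact ⟨(s, i), hs⟩
  have h : ∃ u, coeffM a u ≠ 0 ∧ ∀ v, coeffM a v ≠ 0 → tle v u :=
    exists_max_of_finite tle hord.tle_refl hord.tle_trans hord.tle_total hfin hne
  rw [sig, dif_pos h]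
  exact h.choose_spec

theorem tle_sig (hord : OrdersOK ple tle) {a : Fin m → MvPolynomial (Fin n) K} {v : Term n m}
    (hv : coeffM a v ≠ 0) : tle v (sig tle a) :=
  (sig_spec hord (a := a) (by rintro rfl; simp [coeffM] at hv)).2 v hv

/-- The junk signature of `0` is the smallest term, so no assumption `a ≠ 0` is needed. -/
theorem sig_tle (hord : OrdersOK ple tle) {a : Fin m → MvPolynomial (Fin n) K} {S : Term n m}
    (h : ∀ u, coeffM a u ≠ 0 → tle u S) : tle (sig tle a) S := by
  by_cases ha : a = 0
  · subst ha
    rw [sig, dif_neg (by simp [coeffM])]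
    exact hord.tle_compat _ _ _ _ (hord.ple_one_le _) (Fin.zero_le _)
  · exact h _ (sig_spec hord ha).1

end

theorem bar_sub (a b : Fin m → MvPolynomial (Fin n) K) : bar f (a - b) = bar f a - bar f b := by
  simp [bar, sub_mul, Finset.sum_sub_distrib]

theorem bar_monomMul (c : K) (t : PP n) (a : Fin m → MvPolynomial (Fin n) K) :
    bar f (monomMul c t a) = MvPolynomial.monomial t c * bar f a := by
  simp [bar, monomMul, Finset.mul_sum, mul_assoc]

theorem coeffM_sub (a b : Fin m → MvPolynomial (Fin n) K) (u : Term n m) :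
    coeffM (a - b) u = coeffM a u - coeffM b u := by
  simp [coeffM]

theorem exists_of_coeff_monomial_mul_ne_zero {c : K} {t s : PP n} {p : MvPolynomial (Fin n) K}
    (h : MvPolynomial.coeff s (MvPolynomial.monomial t c * p) ≠ 0) :
    ∃ r, s = t + r ∧ MvPolynomial.coeff r p ≠ 0 := by
  rw [MvPolynomial.coeff_monomial_mul'] at h
  split_ifs at h with hts
  · exact ⟨s - t, (add_tsub_cancel_of_le hts).symm, right_ne_zero_of_mul h⟩
  · exact absurd rfl h

theorem exists_of_coeffM_monomMul_ne_zero {c : K} {t : PP n}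
    {a : Fin m → MvPolynomial (Fin n) K} {u : Term n m} (h : coeffM (monomMul c t a) u ≠ 0) :
    ∃ v, u = mulTerm t v ∧ coeffM a v ≠ 0 := by
  obtain ⟨r, hr, hne⟩ := exists_of_coeff_monomial_mul_ne_zero h
  exact ⟨(r, u.2), Prod.ext hr rfl, hne⟩

section

variable {f ple tle}

/-- An s-reduction step does not increase an upper bound of the terms. -/
theorem RedStepWith.tle_of_coeffM_ne_zero (hord : OrdersOK ple tle)
    {G : Set (Fin m → MvPolynomial (Fin n) K)} {a b g : Fin m → MvPolynomial (Fin n) K}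
    {t : PP n} (h : RedStepWith f ple tle G a b g t) {S : Term n m}
    (ha : ∀ u, coeffM a u ≠ 0 → tle u S) : ∀ u, coeffM b u ≠ 0 → tle u S := by
  obtain ⟨-, -, -, rfl, hsig⟩ := h
  intro u hu
  by_cases hau : coeffM a u = 0
  · rw [coeffM_sub, hau, zero_sub, neg_ne_zero] at hu
    obtain ⟨v, rfl, hv⟩ := exists_of_coeffM_monomMul_ne_zero hu
    exact hord.tle_trans _ _ _ (hord.tle_mul t _ _ (tle_sig hord hv))
      (hord.tle_trans _ _ _ hsig (sig_tle hord ha))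
  · exact ha u hau

/-- An s-reduction step that is not top preserves the leading power-product. -/
theorem RedStepWith.lp_eq_of_not_topWith (hord : OrdersOK ple tle)
    {G : Set (Fin m → MvPolynomial (Fin n) K)} {a b g : Fin m → MvPolynomial (Fin n) K}
    {t : PP n} (h : RedStepWith f ple tle G a b g t) (htop : ¬ TopWith f ple a g t) :
    bar f b ≠ 0 ∧ lp ple (bar f b) = lp ple (bar f a) := by
  obtain ⟨-, hg, hcoeff, rfl, -⟩ := h
  have ha : bar f a ≠ 0 := MvPolynomial.ne_zero_iff.mpr ⟨_, hcoeff⟩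
  obtain ⟨hlp, hmax⟩ := lp_spec hord ha
  rw [bar_sub, bar_monomMul]
  set c := MvPolynomial.coeff (t + lp ple (bar f g)) (bar f a) / lc ple (bar f g)
  have hle : ∀ s, MvPolynomial.coeff s (MvPolynomial.monomial t c * bar f g) ≠ 0 →
      ple s (t + lp ple (bar f g)) := by
    intro s hs
    obtain ⟨r, rfl, hr⟩ := exists_of_coeff_monomial_mul_ne_zero hs
    exact hord.ple_mul _ _ _ ((lp_spec hord hg).2 r hr)
  have hzero : MvPolynomial.coeff (lp ple (bar f a)) (MvPolynomial.monomial t c * bar f g) = 0 := by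
    by_contra hne
    exact htop (hord.ple_antisymm _ _ (hmax _ hcoeff) (hle _ hne))
  have hcoeff' : MvPolynomial.coeff (lp ple (bar f a))
      (bar f a - MvPolynomial.monomial t c * bar f g) ≠ 0 := by
    rwa [MvPolynomial.coeff_sub, hzero, sub_zero]
  refine ⟨MvPolynomial.ne_zero_iff.mpr ⟨_, hcoeff'⟩, lp_eq_of_isGreatest hord hcoeff' ?_⟩
  intro s hs
  by_cases has : MvPolynomial.coeff s (bar f a) = 0
  · rw [MvPolynomial.coeff_sub, has, zero_sub, neg_ne_zero] at hs
    exact hord.ple_trans _ _ _ (hle s hs) (hmax _ hcoeff)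
  · exact hmax s has

/-- If `a` s-reduces to zero and `‾a ≠ 0`, then `a` is top s-reducible. -/
theorem SigRedZero.exists_top_reducer (hord : OrdersOK ple tle)
    {G : Set (Fin m → MvPolynomial (Fin n) K)} {a : Fin m → MvPolynomial (Fin n) K}
    (h : SigRedZero f ple tle G a) (ha : bar f a ≠ 0) :
    ∃ g ∈ G, bar f g ≠ 0 ∧ ∃ t, TopWith f ple a g t ∧
      tle (mulTerm t (sig tle g)) (sig tle a) := by
  obtain ⟨z, hred, hz⟩ := h
  suffices ∀ S, (∀ u, coeffM a u ≠ 0 → tle u S) → ∃ g ∈ G, bar f g ≠ 0 ∧ ∃ t,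
      TopWith f ple a g t ∧ tle (mulTerm t (sig tle g)) S from
    this _ fun u hu => tle_sig hord hu
  intro S hS
  induction hred using Relation.ReflTransGen.head_induction_on with
  | refl => exact absurd hz ha
  | @head x y hxy _ ih =>
    obtain ⟨g, t, hstep⟩ := hxy
    by_cases htop : TopWith f ple x g t
    · exact ⟨g, hstep.1, hstep.2.1, t, htop,
        hord.tle_trans _ _ _ hstep.2.2.2.2 (sig_tle hord hS)⟩
    · obtain ⟨hy, hlp⟩ := hstep.lp_eq_of_not_topWith hord htop
      simpa only [TopWith, hlp] using ih hy (hstep.tle_of_coeffM_ne_zero hord hS)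

/-- The signature drops strictly when the leading terms of `a` and `b` cancel. -/
theorem strict_sig_sub (hord : OrdersOK ple tle) {a b : Fin m → MvPolynomial (Fin n) K}
    (hsig : sig tle a = sig tle b) (hlc : lcM tle a = lcM tle b) (hab : a - b ≠ 0) :
    strict tle (sig tle (a - b)) (sig tle a) := by
  constructor
  · refine sig_tle hord fun u hu => ?_
    by_cases hau : coeffM a u = 0
    · rw [coeffM_sub, hau, zero_sub, neg_ne_zero] at hu
      exact hsig ▸ tle_sig hord hu
    · exact tle_sig hord hau
  · intro heq
    refine (sig_spec hord hab).1 ?_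
    rw [heq, coeffM_sub, sub_eq_zero]
    simpa only [lcM, ← hsig] using hlc

/-- The leading power-product of `p - q` is that of `p` or of `q`, unless the leading
power-products and leading coefficients agree. -/
theorem lp_eq_and_lc_eq_of_lp_sub_ne (hord : OrdersOK ple tle) {p q : MvPolynomial (Fin n) K}
    (hp : p ≠ 0) (hq : q ≠ 0) (hpL : lp ple p ≠ lp ple (p - q))
    (hqL : lp ple q ≠ lp ple (p - q)) : lp ple p = lp ple q ∧ lc ple p = lc ple q := by
  obtain ⟨hp₁, hp₂⟩ := lp_spec hord hp
  obtain ⟨hq₁, hq₂⟩ := lp_spec hord hq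
  have hbound : ∀ t, ple (lp ple p) t → ple (lp ple q) t →
      ∀ s, MvPolynomial.coeff s (p - q) ≠ 0 → ple s t := by
    intro t hpt hqt s hs
    by_cases hps : MvPolynomial.coeff s p = 0
    · rw [MvPolynomial.coeff_sub, hps, zero_sub, neg_ne_zero] at hs
      exact hord.ple_trans _ _ _ (hq₂ s hs) hqt
    · exact hord.ple_trans _ _ _ (hp₂ s hps) hpt
  rcases hord.ple_total (lp ple p) (lp ple q) with h | h
  · have hc : MvPolynomial.coeff (lp ple q) (p - q) = 0 := by
      by_contra hne
      exact hqL (lp_eq_of_isGreatest hord hne (hbound _ h (hord.ple_refl _))).symm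
    rw [MvPolynomial.coeff_sub, sub_eq_zero] at hc
    have heq := hord.ple_antisymm _ _ h (hp₂ _ (hc ▸ hq₁))
    exact ⟨heq, by rw [lc, lc, heq, hc]⟩
  · have hc : MvPolynomial.coeff (lp ple p) (p - q) = 0 := by
      by_contra hne
      exact hpL (lp_eq_of_isGreatest hord hne (hbound _ (hord.ple_refl _) h)).symm
    rw [MvPolynomial.coeff_sub, sub_eq_zero] at hc
    have heq := hord.ple_antisymm _ _ (hq₂ _ (hc ▸ hp₁)) h
    exact ⟨heq, by rw [lc, lc, ← heq, hc]⟩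

/-- A regular top s-irreducible element has no regular reducer at its leading
power-product. -/
theorem RegTopIrred.not_topWith (hord : OrdersOK ple tle)
    {G : Set (Fin m → MvPolynomial (Fin n) K)} {a g : Fin m → MvPolynomial (Fin n) K} {t : PP n}
    (h : RegTopIrred f ple tle G a) (ha : bar f a ≠ 0) (hgG : g ∈ G) (hg : bar f g ≠ 0)
    (hreg : RegularWith tle a g t) : ¬ TopWith f ple a g t := fun htop =>
  h _ ⟨g, t, ⟨hgG, hg, htop.symm ▸ (lp_spec hord ha).1, rfl, hreg.1⟩, hreg, htop⟩

end

/-- uniqueness of leading power-product and leading coefficient for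
regular top s-irreducible elements with equal signatures and leading coefficients. -/
theorem reg_top_irred_lp_lc_unique (hord : OrdersOK ple tle)
    (G : Set (Fin m → MvPolynomial (Fin n) K))
    (a b : Fin m → MvPolynomial (Fin n) K) (ha : a ≠ 0) (hb : b ≠ 0)
    (hsig : sig tle a = sig tle b) (hlc : lcM tle a = lcM tle b)
    (hGB : IsSigGBUpto f ple tle G (sig tle a))
    (hirra : RegTopIrred f ple tle G a) (hirrb : RegTopIrred f ple tle G b) :
    (bar f a = 0 ↔ bar f b = 0) ∧
      (bar f a ≠ 0 → bar f b ≠ 0 →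
        lp ple (bar f a) = lp ple (bar f b) ∧ lc ple (bar f a) = lc ple (bar f b)) := by
  by_cases hbar : bar f (a - b) = 0
  · rw [bar_sub, sub_eq_zero] at hbar
    simp [hbar]
  have hab : a - b ≠ 0 := by
    intro h
    exact hbar (by rw [h]; simp [bar])
  have hlt := strict_sig_sub hord hsig hlc hab
  obtain ⟨g, hgG, hg, t, htop, hle⟩ :=
    (hGB _ hlt (a - b) hab rfl).exists_top_reducer hord hbar
  have hreg : RegularWith tle a g t :=
    ⟨hord.tle_trans _ _ _ hle hlt.1, fun h => hlt.2 (hord.tle_antisymm _ _ hlt.1 (h ▸ hle))⟩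
  have hreg' : RegularWith tle b g t := by rwa [RegularWith, ← hsig]
  have hpa : bar f a ≠ 0 → lp ple (bar f a) ≠ lp ple (bar f a - bar f b) := fun h he =>
    hirra.not_topWith hord h hgG hg hreg (htop.trans (by rw [bar_sub, he]))
  have hpb : bar f b ≠ 0 → lp ple (bar f b) ≠ lp ple (bar f a - bar f b) := fun h he =>
    hirrb.not_topWith hord h hgG hg hreg' (htop.trans (by rw [bar_sub, he]))
  refine ⟨⟨fun h => ?_, fun h => ?_⟩, fun h h' =>
    lp_eq_and_lc_eq_of_lp_sub_ne hord h h' (hpa h) (hpb h')⟩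
  · by_contra hne
    exact hpb hne (by rw [h, zero_sub, lp_neg hord hne])
  · by_contra hne
    exact hpa hne (by rw [h, sub_zero])

end

end SigGB
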